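/- Let S be a semitopological semigroup. If LMC(S) has a left invariant mean, then S has property (G): every Q-nonexpansive dynamical system (S,(K,weak)), where K is a weakly compact convex subset of a Hausdorff locally convex space whose topology is determined by a family Q of seminorms, has a point x ∈ K with sx = x for all s ∈ S. -/

import Mathlib

open Set MeasureTheory BoundedContinuousFunction

noncomputable section

universe u v

/-- The weak topology on a topological module `X` over `𝕜`: the coarsest topology making all
continuous linear functionals continuous. -/
def weakTop (𝕜 : Type*) (X : Type*) [NontriviallyNormedField 𝕜] [AddCommGroup X]
    [Module 𝕜 X] [TopologicalSpace X] : TopologicalSpace X :=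
  ⨅ f : X →L[𝕜] 𝕜, TopologicalSpace.induced (⇑f) inferInstance

/-- A semitopological semigroup: multiplication is separately continuous. -/
def IsSemitopologicalSemigroup (S : Type*) [Semigroup S] [TopologicalSpace S] : Prop :=
  (∀ t : S, Continuous fun s => t * s) ∧ (∀ t : S, Continuous fun s => s * t)

section CbDefs

variable (S : Type u) [Semigroup S] [TopologicalSpace S]

/-- `g` is the family of left translates of `f`: `g s = L_s f` where `L_s f (t) = f (s * t)`. -/
def IsLTranslates (f : S →ᵇ ℂ) (g : S → S →ᵇ ℂ) : Prop :=
  ∀ s t, g s t = f (s * t)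

/-- `LUC(S)`: bounded continuous `f` such that `s ↦ L_s f` is norm continuous. -/
def LUCset : Set (S →ᵇ ℂ) :=
  {f | ∃ g, IsLTranslates S f g ∧ Continuous g}

/-- `AP(S)`: bounded continuous `f` whose set of left translates is relatively compact in the
norm topology of `C(S)`. -/
def APset : Set (S →ᵇ ℂ) :=
  {f | ∃ g, IsLTranslates S f g ∧ IsCompact (closure (Set.range g))}

/-- `WAP(S)`: bounded continuous `f` whose set of left translates is relatively compact in the
weak topology of `C(S)`. -/
def WAPset : Set (S →ᵇ ℂ) :=
  {f | ∃ g, IsLTranslates S f g ∧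
    @IsCompact _ (weakTop ℂ (S →ᵇ ℂ)) (@closure _ (weakTop ℂ (S →ᵇ ℂ)) (Set.range g))}

/-- The topology on `C(S)` induced by the multiplicative means. -/
def lmcTop : TopologicalSpace (S →ᵇ ℂ) :=
  ⨅ μ : {μ : (S →ᵇ ℂ) →L[ℂ] ℂ // ‖μ‖ = 1 ∧ μ 1 = 1 ∧ ∀ f g, μ (f * g) = μ f * μ g},
    TopologicalSpace.induced (⇑μ.1) inferInstance

/-- `LMC(S)`: bounded continuous `f` such that `s ↦ L_s f` is continuous into `C(S)` with the
topology induced by the multiplicative means. -/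
def LMCset : Set (S →ᵇ ℂ) :=
  {f | ∃ g, IsLTranslates S f g ∧ @Continuous _ _ _ (lmcTop S) g}

/-- `Y ⊆ C(S)` has a left invariant mean: there is a norm-one functional `μ` on `C(S)` with
`μ 1 = 1` and `μ (L_s f) = μ f` for all `f ∈ Y` and `s ∈ S`.  (By the Hahn–Banach extension
theorem this is equivalent to the existence of a left invariant mean on the subspace `Y`.) -/
def HasLIM (Y : Set (S →ᵇ ℂ)) : Prop :=
  ∃ μ : (S →ᵇ ℂ) →L[ℂ] ℂ, ‖μ‖ = 1 ∧ μ 1 = 1 ∧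
    ∀ f ∈ Y, ∀ g : S → S →ᵇ ℂ, IsLTranslates S f g → ∀ s, μ (g s) = μ f

end CbDefs

/-- Property (G): every `Q`-nonexpansive dynamical system `(S,(K,weak))` on a nonempty weakly
compact convex subset of a Hausdorff locally convex space has a common fixed point. -/
def PropertyG (S : Type u) [Semigroup S] [TopologicalSpace S] : Prop :=
  ∀ (X : Type v) [AddCommGroup X] [Module ℝ X] [TopologicalSpace X] [T2Space X]
    (ι : Type v) [Nonempty ι] (Q : SeminormFamily ℝ X ι), WithSeminorms Q →
    ∀ (K : Set X) (π : S → X → X),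
      K.Nonempty → Convex ℝ K → @IsCompact X (weakTop ℝ X) K →
      (∀ s : S, MapsTo (π s) K K) →
      (∀ s t : S, ∀ x ∈ K, π (s * t) x = π s (π t x)) →
      -- the action is separately continuous when `K` carries the weak topology
      (∀ x ∈ K, @Continuous S X _ (weakTop ℝ X) fun s => π s x) →
      (∀ s : S, @ContinuousOn X X (weakTop ℝ X) (weakTop ℝ X) (π s) K) →
      -- the action is `Q`-nonexpansive
      (∀ (i : ι) (s : S), ∀ x ∈ K, ∀ y ∈ K, Q i (π s x - π s y) ≤ Q i (x - y)) →
      ∃ x ∈ K, ∀ s : S, π s x = x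

/-!
By Zorn's lemma it suffices to show that a minimal nonempty weakly compact convex invariant set `M`
is a single point. A left invariant mean on `LMC(S)` yields an invariant regular probability
measure `m` on `M`: a multiplicative mean composed with an orbit map is evaluation at a point, so
continuous functions on `M` restrict to functions in `LMC(S)` along orbits.

For a continuous seminorm `p` under which the action is nonexpansive, the mean square distance
`x ↦ ∫ p (x - z) ^ 2 ∂m` is convex and continuous, and it decreases along the action. Its sublevel
sets therefore exhaust `M`, so it is constant on `M`, and its strong convexity in the distance
makes `p (x - z)` for `m`-almost every `z` independent of `x ∈ M`; call this value `c z`.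

If `c` were nonzero on a set of positive measure, one could choose points `y₀, y₁, …` in a
decreasing sequence of compact sets of positive measure, such that every cluster point `z` of the
sequence has `c z ≠ 0` and `p (x - z) = c z` for all `x` in the convex hull of the `yₙ`. But `z` is
in the weak closure of this hull, which is its closure by Mazur's theorem, so `c z = p (z - z) = 0`.
Hence any two points of `M` are at `p`-distance zero from a common point.
-/

open Filter Topology

section WeakTopology

variable {X Z : Type*} [AddCommGroup X] [TopologicalSpace X]

theorem weakTop_eq_weakSpace (𝕜 : Type*) [NontriviallyNormedField 𝕜] [Module 𝕜 X] :
    weakTop 𝕜 X = (inferInstance : TopologicalSpace (WeakSpace 𝕜 X)) :=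
  (induced_to_pi fun (x : X) (f : X →L[𝕜] 𝕜) => f x).symm

variable [Module ℝ X] [IsTopologicalAddGroup X] [TopologicalSpace Z] {e : Z → X} {p : Seminorm ℝ X}

theorem isClosed_preimage_of_convex [ContinuousSMul ℝ X] [LocallyConvexSpace ℝ X]
    (he : Continuous fun z => toWeakSpace ℝ X (e z)) {C : Set X} (hC : Convex ℝ C)
    (hCc : IsClosed C) : IsClosed (e ⁻¹' C) := by
  have hweak : IsClosed (toWeakSpace ℝ X '' C) := by
    rw [← hCc.closure_eq, hC.toWeakSpace_closure ℝ]
    exact isClosed_closure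
  have hpre : e ⁻¹' C = (fun z => toWeakSpace ℝ X (e z)) ⁻¹' (toWeakSpace ℝ X '' C) := by
    ext z
    simp only [mem_preimage, (toWeakSpace ℝ X).injective.mem_set_image]
  exact hpre ▸ hweak.preimage he

theorem lowerSemicontinuous_seminorm_sub [ContinuousSMul ℝ X] [LocallyConvexSpace ℝ X]
    (he : Continuous fun z => toWeakSpace ℝ X (e z)) (hp : Continuous p) (x : X) :
    LowerSemicontinuous fun z => p (x - e z) := by
  refine lowerSemicontinuous_iff_isClosed_preimage.2 fun r => ?_
  have hball : (fun z => p (x - e z)) ⁻¹' Iic r = e ⁻¹' p.closedBall x r := by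
    ext z
    simp only [mem_preimage, mem_Iic, Seminorm.mem_closedBall, map_sub_rev p x]
  rw [hball]
  exact isClosed_preimage_of_convex he (p.convex_closedBall x r)
    (isClosed_le (by fun_prop) continuous_const)

/-- Banach–Steinhaus in the dual of `(E, q)`. -/
theorem exists_seminorm_le_of_forall_dual_bounded {𝕜 E ι : Type*} [RCLike 𝕜] [AddCommGroup E]
    [Module 𝕜 E] (q : Seminorm 𝕜 E) (v : ι → E)
    (hv : ∀ f : E →ₗ[𝕜] 𝕜, (∃ C, ∀ x, ‖f x‖ ≤ C * q x) → ∃ C, ∀ i, ‖f (v i)‖ ≤ C) :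
    ∃ C, ∀ i, q (v i) ≤ C := by
  let := q.toAddGroupSeminorm.toSeminormedAddCommGroup
  let : NormedSpace 𝕜 E := ⟨fun c x => (map_smul_eq_mul q c x).le⟩
  obtain ⟨C, hC⟩ := banach_steinhaus
    (g := fun i => NormedSpace.inclusionInDoubleDual 𝕜 E (v i))
    fun f => hv f ⟨‖f‖, f.le_opNorm⟩
  exact ⟨C, fun i => ((NormedSpace.inclusionInDoubleDualLi 𝕜).norm_map (v i)).symm.trans_le (hC i)⟩

theorem exists_seminorm_le_of_weakly_compact [CompactSpace Z]
    (he : Continuous fun z => toWeakSpace ℝ X (e z)) (hp : Continuous p) :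
    ∃ R, ∀ z, p (e z) ≤ R := by
  refine exists_seminorm_le_of_forall_dual_bounded p e fun f ⟨C, hC⟩ => ?_
  have hf : Continuous f := by
    refine continuous_of_continuousAt_zero f ?_
    rw [ContinuousAt, map_zero]
    refine squeeze_zero_norm hC ?_
    simpa using (hp.const_mul C).tendsto 0
  have hfe : Continuous fun z => f (e z) :=
    (WeakBilin.eval_continuous (topDualPairing ℝ X).flip (⟨f, hf⟩ : X →L[ℝ] ℝ)).comp he
  obtain ⟨R, hR⟩ := isCompact_univ.exists_bound_of_continuousOn hfe.continuousOn
  exact ⟨R, fun z => hR z (mem_univ z)⟩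

end WeakTopology

section EquidistantPoints

theorem ae_forall_eq_of_continuous {W Z β : Type*} [TopologicalSpace W]
    [TopologicalSpace.SeparableSpace W] [TopologicalSpace β] [T2Space β] [MeasurableSpace Z]
    {m : Measure Z} {f g : W → Z → β} (hf : ∀ z, Continuous fun w => f w z)
    (hg : ∀ z, Continuous fun w => g w z) (hfg : ∀ w, ∀ᵐ z ∂m, f w z = g w z) :
    ∀ᵐ z ∂m, ∀ w, f w z = g w z := by
  obtain ⟨D, hDc, hD⟩ := TopologicalSpace.exists_countable_dense W
  filter_upwards [(ae_ball_iff hDc).2 fun w _ => hfg w] with z hz w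
  exact congrFun ((hf z).ext_on hD (hg z) hz) w

variable {X Z : Type*} [AddCommGroup X] [Module ℝ X] [TopologicalSpace X]
  [IsTopologicalAddGroup X] [ContinuousSMul ℝ X] [MeasurableSpace Z] {m : Measure Z}
  {p : Seminorm ℝ X} {e : Z → X}

theorem ae_forall_mem_convexHull_seminorm_sub_eq (hp : Continuous p) {K : Set X}
    (hK : Convex ℝ K) {c : Z → ℝ} (hc : ∀ x ∈ K, ∀ᵐ z ∂m, p (x - e z) = c z) {s : Set X}
    (hs : s.Finite) (hsK : s ⊆ K) : ∀ᵐ z ∂m, ∀ x ∈ convexHull ℝ s, p (x - e z) = c z := by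
  let := hs.fintype
  let combo : (s → ℝ) →ₗ[ℝ] X := ∑ x : s, (LinearMap.proj x).smulRight x.1
  have hcombo : convexHull ℝ s = range fun w : stdSimplex ℝ s => combo w := by
    rw [hs.convexHull_eq_image, image_eq_range]
    rfl
  have hcont : Continuous combo := combo.continuous_on_pi
  have hcomboK (w : stdSimplex ℝ s) : combo w ∈ K :=
    convexHull_min hsK hK (hcombo ▸ mem_range_self w)
  simpa only [hcombo, forall_mem_range] using
    ae_forall_eq_of_continuous (W := stdSimplex ℝ s) (f := fun w z => p (combo w - e z))
      (g := fun _ => c) (fun z => by fun_prop) (fun z => continuous_const) fun w => hc _ (hcomboK w)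

end EquidistantPoints

section Selection

variable {Z : Type*} [TopologicalSpace Z] [MeasurableSpace Z] {m : Measure Z} [IsFiniteMeasure m]
  [m.InnerRegularCompactLTTop]

theorem exists_isCompact_subset_measure_ne_zero {L G : Set Z} (hL : MeasurableSet L)
    (hLm : m L ≠ 0) (hG : ∀ᵐ z ∂m, z ∈ G) :
    ∃ L' ⊆ L ∩ G, IsCompact L' ∧ m L' ≠ 0 := by
  obtain ⟨N, hGN, hN, hN0⟩ := exists_measurable_superset_of_null (ae_iff.1 hG)
  obtain ⟨L', hL', hL'c, hL'm⟩ := (hL.diff hN).exists_lt_isCompact_of_ne_top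
    (measure_ne_top m _) (pos_iff_ne_zero.2 (by rwa [measure_sdiff_null hN0] : m (L \ N) ≠ 0))
  exact ⟨L', fun z hz => ⟨(hL' hz).1, by_contra fun h => (hL' hz).2 (hGN h)⟩, hL'c, hL'm.ne'⟩

variable [T2Space Z] [BorelSpace Z] {L : Set Z} {G : Set Z → Set Z}

theorem exists_antitone_isCompact_seq (hL : IsCompact L) (hLm : m L ≠ 0)
    (hG : ∀ t : Set Z, t.Finite → ∀ᵐ z ∂m, z ∈ G t) :
    ∃ (y : ℕ → Z) (A : ℕ → Set Z), Antitone A ∧ A 0 = L ∧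
      ∀ n, IsCompact (A n) ∧ y n ∈ A n ∧ A (n + 1) ⊆ G (y '' Iio n) := by
  let State := {q : Set Z × Set Z // q.1.Finite ∧ IsCompact q.2 ∧ m q.2 ≠ 0}
  have step (q : State) : ∃ A ⊆ q.1.2 ∩ G q.1.1, ∃ y ∈ A, IsCompact A ∧ m A ≠ 0 := by
    obtain ⟨⟨t, B⟩, ht, hB, hBm⟩ := q
    obtain ⟨A, hAB, hA, hAm⟩ :=
      exists_isCompact_subset_measure_ne_zero hB.measurableSet hBm (hG t ht)
    obtain ⟨y, hy⟩ := nonempty_of_measure_ne_zero hAm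
    exact ⟨A, hAB, y, hy, hA, hAm⟩
  choose next hnext pt hpt hnextc hnextm using step
  let st : ℕ → State := Nat.rec ⟨(∅, L), finite_empty, hL, hLm⟩ fun _ q =>
    ⟨(insert (pt q) q.1.1, next q), q.2.1.insert _, hnextc q, hnextm q⟩
  have hpts (n : ℕ) : (st n).1.1 = (fun k => pt (st k)) '' Iio n := by
    induction n with
    | zero => simp [st]
    | succ n ih =>
      rw [← Order.succ_eq_add_one, Order.Iio_succ_eq_insert, image_insert_eq, ← ih]
      rfl
  refine ⟨fun n => pt (st n), fun n => (st n).1.2,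
    antitone_nat_of_succ_le fun n => (hnext (st n)).trans inter_subset_left, rfl,
    fun n => ⟨(st n).2.2.1, (hnext (st n) (hpt (st n))).1, ?_⟩⟩
  rw [← hpts n]
  exact (hnext (st n)).trans inter_subset_right

theorem exists_mapClusterPt_forall_mem (hL : MeasurableSet L) (hLm : m L ≠ 0)
    (hG : ∀ t : Set Z, t.Finite → ∀ᵐ z ∂m, z ∈ G t) :
    ∃ (y : ℕ → Z) (z : Z), z ∈ L ∧ MapClusterPt z atTop y ∧ ∀ n, z ∈ G (y '' Iio n) := by
  obtain ⟨L', hL', hL'c, hL'm⟩ :=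
    exists_isCompact_subset_measure_ne_zero hL hLm (Eventually.of_forall mem_univ)
  obtain ⟨y, A, hA, hA0, hyA⟩ := exists_antitone_isCompact_seq hL'c hL'm hG
  have hy (n : ℕ) : ∀ᶠ k in atTop, y k ∈ A n :=
    (eventually_ge_atTop n).mono fun k hk => hA hk (hyA k).2.1
  obtain ⟨z, -, hz⟩ := (hyA 0).1.exists_mapClusterPt_of_frequently (hy 0).frequently
  have hzA (n : ℕ) : z ∈ A n := (hyA n).1.isClosed.mem_of_mapClusterPt hz (hy n)
  exact ⟨y, z, (hL' (hA0 ▸ hzA 0)).1, hz, fun n => (hyA n).2.2 (hzA (n + 1))⟩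

end Selection

section EquidistantMeasure

theorem convexHull_range_subset_iUnion {X : Type*} [AddCommGroup X] [Module ℝ X] (v : ℕ → X) :
    convexHull ℝ (range v) ⊆ ⋃ n, convexHull ℝ (v '' Iio n) := by
  have hmono : Monotone fun n => convexHull ℝ (v '' Iio n) := fun _ _ h =>
    convexHull_mono (image_mono (Iio_subset_Iio h))
  refine convexHull_min ?_ (hmono.directed_le.convex_iUnion fun _ => convex_convexHull ℝ _)
  rintro _ ⟨n, rfl⟩
  exact mem_iUnion.2 ⟨n + 1, subset_convexHull ℝ _ (mem_image_of_mem v n.lt_succ_self)⟩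

variable {X Z : Type*} [AddCommGroup X] [Module ℝ X] [TopologicalSpace X]
  [IsTopologicalAddGroup X] [ContinuousSMul ℝ X] [LocallyConvexSpace ℝ X] [TopologicalSpace Z]
  [T2Space Z] [MeasurableSpace Z] [BorelSpace Z] {m : Measure Z} [IsFiniteMeasure m]
  [m.InnerRegularCompactLTTop] {p : Seminorm ℝ X} {e : Z → X}

theorem ae_seminorm_sub_eq_zero_of_equidistant
    (he : Continuous fun z => toWeakSpace ℝ X (e z)) (hp : Continuous p)
    (hconv : Convex ℝ (range e)) {z₀ : Z}
    (hm : ∀ x, ∀ᵐ z ∂m, p (e x - e z) = p (e z₀ - e z)) :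
    ∀ᵐ z ∂m, p (e z₀ - e z) = 0 := by
  by_contra hne
  have hmeas : Measurable fun z => p (e z₀ - e z) :=
    (lowerSemicontinuous_seminorm_sub he hp _).measurable
  obtain ⟨y, z, hz, hyz, hconst⟩ := exists_mapClusterPt_forall_mem
    (L := {z | p (e z₀ - e z) ≠ 0})
    (G := fun t => {z | ∀ x ∈ convexHull ℝ (e '' t), p (x - e z) = p (e z₀ - e z)})
    (hmeas (measurableSet_singleton 0).compl) hne fun t ht =>
      ae_forall_mem_convexHull_seminorm_sub_eq hp hconv (forall_mem_range.2 hm) (ht.image e)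
        (image_subset_range e t)
  have hhull : convexHull ℝ (range (e ∘ y)) ⊆ {x | p (x - e z) = p (e z₀ - e z)} := fun x hx => by
    obtain ⟨n, hn⟩ := mem_iUnion.1 (convexHull_range_subset_iUnion _ hx)
    exact hconst n x (image_comp e y (Iio n) ▸ hn)
  have hclosure : closure (convexHull ℝ (range (e ∘ y))) ⊆ {x | p (x - e z) = p (e z₀ - e z)} :=
    closure_minimal hhull (isClosed_eq (by fun_prop) continuous_const)
  have hez : e z ∈ closure (convexHull ℝ (range (e ∘ y))) :=
    (isClosed_preimage_of_convex he (convex_convexHull ℝ _).closure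
      isClosed_closure).mem_of_mapClusterPt hyz (Eventually.of_forall fun n =>
        subset_closure (subset_convexHull ℝ _ (mem_range_self n)))
  have hzero : p (e z - e z) = p (e z₀ - e z) := hclosure hez
  exact hz (by rw [← hzero, sub_self, map_zero])

end EquidistantMeasure

section MeanSquareDistance

variable {X Z : Type*} [AddCommGroup X] [Module ℝ X] [MeasurableSpace Z]

/-- The mean square `p`-distance from `x` to the points of `e`, weighted by `m`. As a Bochner
integral it is zero when the integrand is not integrable. -/
def meanSqDist (p : Seminorm ℝ X) (e : Z → X) (m : Measure Z) (x : X) : ℝ :=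
  ∫ z, p (x - e z) ^ 2 ∂m

variable {p : Seminorm ℝ X} {e : Z → X} {m : Measure Z}

theorem sq_seminorm_convexCombo_add_le (p : Seminorm ℝ X) (x y : X) {a b : ℝ} (ha : 0 ≤ a)
    (hb : 0 ≤ b) (hab : a + b = 1) :
    p (a • x + b • y) ^ 2 + a * b * (p x - p y) ^ 2 ≤ a * p x ^ 2 + b * p y ^ 2 := by
  have hle : p (a • x + b • y) ≤ a * p x + b * p y := by
    simpa [map_smul_eq_mul, abs_of_nonneg ha, abs_of_nonneg hb]
      using map_add_le_add p (a • x) (b • y)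
  calc p (a • x + b • y) ^ 2 + a * b * (p x - p y) ^ 2
    _ ≤ (a * p x + b * p y) ^ 2 + a * b * (p x - p y) ^ 2 := by gcongr
    _ = (a + b) * (a * p x ^ 2 + b * p y ^ 2) := by ring
    _ = a * p x ^ 2 + b * p y ^ 2 := by rw [hab, one_mul]

theorem memLp_seminorm_sub [IsFiniteMeasure m] (hmeas : ∀ x, Measurable fun z => p (x - e z))
    {R : ℝ} (hR : ∀ z, p (e z) ≤ R) (x : X) : MemLp (fun z => p (x - e z)) 2 m := by
  refine MemLp.of_bound (hmeas x).aestronglyMeasurable (p x + R) (Eventually.of_forall fun z => ?_)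
  rw [Real.norm_of_nonneg (apply_nonneg p _)]
  exact (map_sub_le_add p x (e z)).trans (by gcongr; exact hR z)

theorem meanSqDist_convexCombo_add_le (hL2 : ∀ x, MemLp (fun z => p (x - e z)) 2 m) (x y : X)
    {a b : ℝ} (ha : 0 ≤ a) (hb : 0 ≤ b) (hab : a + b = 1) :
    meanSqDist p e m (a • x + b • y) + a * b * ∫ z, (p (x - e z) - p (y - e z)) ^ 2 ∂m ≤
      a * meanSqDist p e m x + b * meanSqDist p e m y := by
  have hsq (x) := (hL2 x).integrable_sq
  have hdiff := ((hL2 x).sub (hL2 y)).integrable_sq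
  simp only [meanSqDist, Pi.sub_apply, ← integral_const_mul] at hdiff ⊢
  rw [← integral_add (hsq _) (hdiff.const_mul _),
    ← integral_add ((hsq x).const_mul a) ((hsq y).const_mul b)]
  refine integral_mono ((hsq _).add (hdiff.const_mul _))
    (((hsq x).const_mul a).add ((hsq y).const_mul b)) fun z => ?_
  have hcombo : a • x + b • y - e z = a • (x - e z) + b • (y - e z) := by
    calc a • x + b • y - e z
      _ = a • x + b • y - (a + b) • e z := by rw [hab, one_smul]
      _ = a • (x - e z) + b • (y - e z) := by module
  simpa only [hcombo, Pi.add_apply] using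
    sq_seminorm_convexCombo_add_le p (x - e z) (y - e z) ha hb hab

theorem convexOn_meanSqDist (hL2 : ∀ x, MemLp (fun z => p (x - e z)) 2 m) :
    ConvexOn ℝ univ (meanSqDist p e m) := by
  refine ⟨convex_univ, fun x _ y _ a b ha hb hab => ?_⟩
  have hnonneg : 0 ≤ a * b * ∫ z, (p (x - e z) - p (y - e z)) ^ 2 ∂m :=
    mul_nonneg (mul_nonneg ha hb) (integral_nonneg fun z => sq_nonneg _)
  simpa only [smul_eq_mul] using
    (le_add_of_nonneg_right hnonneg).trans (meanSqDist_convexCombo_add_le hL2 x y ha hb hab)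

theorem ae_seminorm_sub_eq_of_meanSqDist_le_midpoint (hL2 : ∀ x, MemLp (fun z => p (x - e z)) 2 m)
    {x y : X} (hx : meanSqDist p e m x ≤ meanSqDist p e m (midpoint ℝ x y))
    (hy : meanSqDist p e m y ≤ meanSqDist p e m (midpoint ℝ x y)) :
    ∀ᵐ z ∂m, p (x - e z) = p (y - e z) := by
  have hmid : midpoint ℝ x y = (1 / 2 : ℝ) • x + (1 / 2 : ℝ) • y := by
    rw [midpoint_eq_smul_add, smul_add, invOf_eq_inv, one_div]
  have hstrong := meanSqDist_convexCombo_add_le hL2 x y (a := 1 / 2) (b := 1 / 2)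
    (by norm_num) (by norm_num) (by norm_num)
  rw [← hmid] at hstrong
  have hzero : ∫ z, (p (x - e z) - p (y - e z)) ^ 2 ∂m = 0 :=
    le_antisymm (by linarith) (integral_nonneg fun z => sq_nonneg _)
  filter_upwards [(integral_eq_zero_iff_of_nonneg
    (f := fun z => (p (x - e z) - p (y - e z)) ^ 2) (fun z => sq_nonneg _)
    ((hL2 x).sub (hL2 y)).integrable_sq).1 hzero] with z hz
  exact sub_eq_zero.1 (pow_eq_zero_iff two_ne_zero |>.1 hz)

theorem abs_meanSqDist_sub_le [IsFiniteMeasure m]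
    (hL2 : ∀ x, MemLp (fun z => p (x - e z)) 2 m) {R : ℝ} (hR : ∀ z, p (e z) ≤ R) (x y : X) :
    |meanSqDist p e m x - meanSqDist p e m y| ≤
      (p x + p y + 2 * R) * p (x - y) * m.real univ := by
  rw [meanSqDist, meanSqDist, ← integral_sub (hL2 x).integrable_sq (hL2 y).integrable_sq,
    ← Real.norm_eq_abs]
  refine norm_integral_le_of_norm_le_const (Eventually.of_forall fun z => ?_)
  have hsum : |p (x - e z) + p (y - e z)| ≤ p x + p y + 2 * R := by
    rw [abs_of_nonneg (by positivity)]
    linarith [map_sub_le_add p x (e z), map_sub_le_add p y (e z), hR z]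
  have hdiff : |p (x - e z) - p (y - e z)| ≤ p (x - y) := by
    simpa only [sub_sub_sub_cancel_right] using abs_sub_map_le_sub p (x - e z) (y - e z)
  rw [Real.norm_eq_abs, sq_sub_sq, abs_mul]
  exact mul_le_mul hsum hdiff (abs_nonneg _) ((abs_nonneg _).trans hsum)

theorem continuous_meanSqDist [IsFiniteMeasure m] [TopologicalSpace X]
    [IsTopologicalAddGroup X] (hp : Continuous p)
    (hL2 : ∀ x, MemLp (fun z => p (x - e z)) 2 m) {R : ℝ} (hR : ∀ z, p (e z) ≤ R) :
    Continuous (meanSqDist p e m) := by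
  refine continuous_iff_continuousAt.2 fun y => ?_
  have hbound : Continuous fun x => (p x + p y + 2 * R) * p (x - y) * m.real univ := by fun_prop
  refine tendsto_iff_dist_tendsto_zero.2 (squeeze_zero (fun _ => dist_nonneg)
    (fun x => abs_meanSqDist_sub_le hL2 hR x y) ?_)
  simpa using hbound.tendsto y

theorem meanSqDist_map_le {f : Z → Z} (hf : MeasurePreserving f m m)
    (hL2 : ∀ x, MemLp (fun z => p (x - e z)) 2 m) {z : Z}
    (hle : ∀ y, p (e (f z) - e (f y)) ≤ p (e z - e y)) :
    meanSqDist p e m (e (f z)) ≤ meanSqDist p e m (e z) := by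
  calc meanSqDist p e m (e (f z))
    _ = ∫ y, p (e (f z) - e y) ^ 2 ∂(m.map f) := by rw [hf.map_eq, meanSqDist]
    _ = ∫ y, p (e (f z) - e (f y)) ^ 2 ∂m := integral_map hf.aemeasurable
        (hf.map_eq.symm ▸ (hL2 _).integrable_sq.aestronglyMeasurable)
    _ ≤ meanSqDist p e m (e z) := by
        refine integral_mono_of_nonneg (Eventually.of_forall fun y => sq_nonneg _)
          (hL2 _).integrable_sq (Eventually.of_forall fun y => ?_)
        exact pow_le_pow_left₀ (apply_nonneg p _) (hle y) 2

end MeanSquareDistance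

section InvariantMeasure

variable {Z : Type*} [TopologicalSpace Z] [CompactSpace Z]

theorem exists_eval_of_algHom [T2Space Z] {𝕜 : Type*} [RCLike 𝕜] (χ : C(Z, 𝕜) →ₐ[𝕜] 𝕜) :
    ∃ z, ∀ h, χ h = h z := by
  obtain ⟨z, hz⟩ := (WeakDual.CharacterSpace.continuousMapEval_bijective Z 𝕜).2
    (WeakDual.CharacterSpace.equivAlgHom.symm χ)
  exact ⟨z, fun h => (DFunLike.congr_fun hz h).symm⟩

theorem exists_isProbabilityMeasure_integral_eq [T2Space Z] [MeasurableSpace Z] [BorelSpace Z]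
    (Λ : C(Z, ℝ) →ₗ[ℝ] ℝ) (hle : ∀ h, Λ h ≤ ‖h‖) (hone : Λ 1 = 1) :
    ∃ m : Measure Z, IsProbabilityMeasure m ∧ m.Regular ∧ ∀ h : C(Z, ℝ), ∫ z, h z ∂m = Λ h := by
  have hpos (h : C(Z, ℝ)) (hh : 0 ≤ h) : 0 ≤ Λ h := by
    have hnorm : ‖‖h‖ • 1 - h‖ ≤ ‖h‖ := by
      refine (ContinuousMap.norm_le _ (norm_nonneg h)).2 fun z => ?_
      have hz : h z ≤ ‖h‖ := (le_abs_self _).trans (h.norm_coe_le_norm z)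
      simpa [abs_of_nonneg (sub_nonneg.2 hz)] using hh z
    have := (hle _).trans hnorm
    rw [map_sub, map_smul, hone, smul_eq_mul, mul_one] at this
    linarith
  let Λc : CompactlySupportedContinuousMap Z ℝ →ₚ[ℝ] ℝ := PositiveLinearMap.mk₀
    { toFun h := Λ h.toContinuousMap
      map_add' h k := map_add Λ h.toContinuousMap k.toContinuousMap
      map_smul' c h := map_smul Λ c h.toContinuousMap } fun h hh => hpos _ hh
  have hint (h : C(Z, ℝ)) : ∫ z, h z ∂(RealRMK.rieszMeasure Λc) = Λ h :=
    RealRMK.integral_rieszMeasure Λc ⟨h, HasCompactSupport.of_compactSpace h⟩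
  have hreal : (RealRMK.rieszMeasure Λc).real univ = 1 := by simpa [hone] using hint 1
  exact ⟨RealRMK.rieszMeasure Λc, ⟨(ENNReal.toReal_eq_one_iff _).1 hreal⟩, inferInstance, hint⟩

theorem measurePreserving_of_integral_comp_eq [T2Space Z] [MeasurableSpace Z] [BorelSpace Z]
    {m : Measure Z} [IsFiniteMeasure m] [m.InnerRegularCompactLTTop] {f : Z → Z}
    (hf : Continuous f) (hint : ∀ h : C(Z, ℝ), ∫ z, h (f z) ∂m = ∫ z, h z ∂m) :
    MeasurePreserving f m m := by
  refine ⟨hf.measurable, ?_⟩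
  have : (m.map f).InnerRegularCompactLTTop :=
    Measure.InnerRegularCompactLTTop.map_of_continuous hf
  refine Measure.ext_of_integral_eq_on_compactlySupported fun h => ?_
  rw [integral_map hf.aemeasurable (map_continuous h).aestronglyMeasurable]
  exact hint h.toContinuousMap

/-- Composition with a continuous map into a compact space, as a homomorphism into the algebra of
bounded continuous functions. Along an orbit map it carries functions on a dynamical system to
functions on the acting semigroup. -/
def boundedPullback {S : Type*} [TopologicalSpace S] (c : C(S, Z)) : C(Z, ℂ) →ₐ[ℂ] (S →ᵇ ℂ) where
  toFun h := (mkOfCompact h).compContinuous c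
  map_one' := rfl
  map_mul' _ _ := rfl
  map_zero' := rfl
  map_add' _ _ := rfl
  commutes' _ := rfl

variable {S : Type*} [Semigroup S] [TopologicalSpace S] [SemigroupAction S Z]
  [ContinuousConstSMul S Z]

theorem isLTranslates_boundedPullback_orbit {z₀ : Z} (hz₀ : Continuous fun s : S => s • z₀)
    (h : C(Z, ℂ)) :
    IsLTranslates S (boundedPullback ⟨_, hz₀⟩ h)
      fun s => boundedPullback ⟨_, hz₀⟩ (h.comp ⟨_, continuous_const_smul s⟩) :=
  fun s t => congrArg h (mul_smul s t z₀).symm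

theorem boundedPullback_orbit_mem_LMCset [T2Space Z]
    (hc : ∀ z : Z, Continuous fun s : S => s • z) (z₀ : Z) (h : C(Z, ℂ)) :
    boundedPullback ⟨_, hc z₀⟩ h ∈ LMCset S := by
  refine ⟨_, isLTranslates_boundedPullback_orbit (hc z₀) h,
    continuous_iInf_rng.2 fun ⟨ν, _, hν_one, hν_mul⟩ => continuous_induced_rng.2 ?_⟩
  -- The orbit map turns a multiplicative mean into evaluation at a point of `Z`.
  obtain ⟨z, hz⟩ := exists_eval_of_algHom
    ((AlgHom.ofLinearMap ν.toLinearMap hν_one hν_mul).comp (boundedPullback ⟨_, hc z₀⟩))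
  exact (h.continuous.comp (hc z)).congr fun s => (hz (h.comp ⟨_, continuous_const_smul s⟩)).symm

theorem exists_invariant_isProbabilityMeasure [T2Space Z] [MeasurableSpace Z] [BorelSpace Z]
    [Nonempty Z] (hLIM : HasLIM S (LMCset S)) (hc : ∀ z : Z, Continuous fun s : S => s • z) :
    ∃ m : Measure Z, IsProbabilityMeasure m ∧ m.Regular ∧
      ∀ s : S, MeasurePreserving (s • ·) m m := by
  obtain ⟨μ, hμ_norm, hμ_one, hμ_inv⟩ := hLIM
  obtain ⟨z₀⟩ := ‹Nonempty Z›
  let pull := boundedPullback (⟨_, hc z₀⟩ : C(S, Z))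
  let complexify := Complex.ofRealCLM.compLeftContinuous ℝ Z
  let Λ : C(Z, ℝ) →ₗ[ℝ] ℝ := Complex.reLm ∘ₗ μ.toLinearMap.restrictScalars ℝ ∘ₗ
    pull.toLinearMap.restrictScalars ℝ ∘ₗ complexify.toLinearMap
  have hle (h : C(Z, ℝ)) : Λ h ≤ ‖h‖ := by
    calc Λ h
      _ ≤ ‖μ (pull (complexify h))‖ := Complex.re_le_norm _
      _ ≤ ‖pull (complexify h)‖ := by
        simpa only [hμ_norm, one_mul] using μ.le_opNorm _
      _ ≤ ‖h‖ := (norm_le (norm_nonneg h)).2 fun s =>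
        (Complex.norm_real _).trans_le (h.norm_coe_le_norm (s • z₀))
  have hone : Λ 1 = 1 := congrArg Complex.re hμ_one
  have hinv (s : S) (h : C(Z, ℝ)) : Λ (h.comp ⟨_, continuous_const_smul s⟩) = Λ h := by
    have hμ := hμ_inv _ (boundedPullback_orbit_mem_LMCset hc z₀ (complexify h)) _
      (isLTranslates_boundedPullback_orbit (hc z₀) _) s
    exact congrArg Complex.re hμ
  obtain ⟨m, hm, hm_reg, hmΛ⟩ := exists_isProbabilityMeasure_integral_eq Λ hle hone
  exact ⟨m, hm, hm_reg, fun s => measurePreserving_of_integral_comp_eq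
    (continuous_const_smul s) fun h => by rw [hmΛ h, ← hinv s h, ← hmΛ]; rfl⟩

end InvariantMeasure

section MinimalSystem

theorem seminorm_sub_eq_zero_of_minimal {ι X Z : Type*} [AddCommGroup X] [Module ℝ X]
    [TopologicalSpace X] [IsTopologicalAddGroup X] [ContinuousSMul ℝ X] [LocallyConvexSpace ℝ X]
    [TopologicalSpace Z] [CompactSpace Z] [T2Space Z] [MeasurableSpace Z] [BorelSpace Z]
    {m : Measure Z} [IsFiniteMeasure m] [NeZero m] [m.InnerRegularCompactLTTop] {a : ι → Z → Z}
    (ha : ∀ i, MeasurePreserving (a i) m m) {e : Z → X}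
    (he : Continuous fun z => toWeakSpace ℝ X (e z)) (hconv : Convex ℝ (range e))
    (hmin : ∀ C : Set X, Convex ℝ C → IsClosed C → (e ⁻¹' C).Nonempty →
      (∀ i, MapsTo (a i) (e ⁻¹' C) (e ⁻¹' C)) → ∀ z, e z ∈ C)
    {p : Seminorm ℝ X} (hp : Continuous p)
    (hle : ∀ i x y, p (e (a i x) - e (a i y)) ≤ p (e x - e y)) (x y : Z) : p (e x - e y) = 0 := by
  obtain ⟨R, hR⟩ := exists_seminorm_le_of_weakly_compact he hp
  have hL2 := memLp_seminorm_sub (m := m)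
    (fun x => (lowerSemicontinuous_seminorm_sub he hp x).measurable) hR
  have hconst (u v : Z) : meanSqDist p e m (e v) ≤ meanSqDist p e m (e u) := by
    refine hmin {w | meanSqDist p e m w ≤ meanSqDist p e m (e u)} ?_ ?_
      ⟨u, le_refl (meanSqDist p e m (e u))⟩
      (fun i z hz => (meanSqDist_map_le (ha i) hL2 (hle i z)).trans hz) v
    · simpa only [mem_univ, true_and] using (convexOn_meanSqDist hL2).convex_le _
    · exact isClosed_le (continuous_meanSqDist hp hL2 hR) continuous_const
  have hequi (u v : Z) : ∀ᵐ z ∂m, p (e u - e z) = p (e v - e z) := by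
    obtain ⟨w, hw⟩ := hconv.midpoint_mem (mem_range_self u) (mem_range_self v)
    exact ae_seminorm_sub_eq_of_meanSqDist_le_midpoint hL2 (hw ▸ hconst w u) (hw ▸ hconst w v)
  have hzero (u : Z) : ∀ᵐ z ∂m, p (e u - e z) = 0 :=
    ae_seminorm_sub_eq_zero_of_equidistant he hp hconv fun v => hequi v u
  obtain ⟨z, hxz, hyz⟩ := ((hzero x).and (hzero y)).exists
  refine le_antisymm ?_ (apply_nonneg p _)
  calc p (e x - e y)
    _ = p ((e x - e z) - (e y - e z)) := by rw [sub_sub_sub_cancel_right]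
    _ ≤ p (e x - e z) + p (e y - e z) := map_sub_le_add p _ _
    _ = 0 := by rw [hxz, hyz, add_zero]

theorem exists_minimal_isCompact {Y : Type*} [TopologicalSpace Y] [T2Space Y] {P : Set Y → Prop}
    (hP : ∀ c : Set (Set Y), (∀ A ∈ c, P A) → P (⋂₀ c)) {K : Set Y} (hne : K.Nonempty)
    (hK : IsCompact K) (hPK : P K) :
    ∃ M ⊆ K, Minimal (fun A => A.Nonempty ∧ IsCompact A ∧ P A) M := by
  refine zorn_superset_nonempty {A | A.Nonempty ∧ IsCompact A ∧ P A}
    (fun c hc hchain hcne => ⟨⋂₀ c, ⟨?_, ?_, hP c fun A hA => (hc hA).2.2⟩,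
      fun A hA => sInter_subset_of_mem hA⟩) K ⟨hne, hK, hPK⟩
  · have := hcne.to_subtype
    exact IsCompact.nonempty_sInter_of_directed_nonempty_isCompact_isClosed
      (IsChain.directedOn hchain.symm) (fun A hA => (hc hA).1) (fun A hA => (hc hA).2.1)
      fun A hA => (hc hA).2.1.isClosed
  · obtain ⟨A, hA⟩ := hcne
    exact (hc hA).2.1.of_isClosed_subset
      (isClosed_sInter fun B hB => (hc hB).2.1.isClosed) (sInter_subset_of_mem hA)

end MinimalSystem

section FixedPoint

variable {S X : Type*} [Semigroup S] [TopologicalSpace S] [AddCommGroup X] [Module ℝ X]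
  [TopologicalSpace X] [T2Space X] {π : S → WeakSpace ℝ X → WeakSpace ℝ X}

theorem seminorm_sub_eq_zero_of_minimal_invariant [IsTopologicalAddGroup X] [ContinuousSMul ℝ X]
    [LocallyConvexSpace ℝ X] (hLIM : HasLIM S (LMCset S)) {M : Set (WeakSpace ℝ X)}
    (hM : Minimal (fun A => A.Nonempty ∧ IsCompact A ∧ Convex ℝ A ∧ ∀ s, MapsTo (π s) A A) M)
    (hmul : ∀ s t, ∀ x ∈ M, π (s * t) x = π s (π t x))
    (horbit : ∀ x ∈ M, Continuous fun s => π s x) (hcont : ∀ s, ContinuousOn (π s) M)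
    {p : Seminorm ℝ X} (hp : Continuous p)
    (hle : ∀ s, ∀ x ∈ M, ∀ y ∈ M, p ((toWeakSpace ℝ X).symm (π s x - π s y)) ≤
      p ((toWeakSpace ℝ X).symm (x - y))) {x y : WeakSpace ℝ X} (hx : x ∈ M) (hy : y ∈ M) :
    p ((toWeakSpace ℝ X).symm (x - y)) = 0 := by
  obtain ⟨⟨hne, hMc, hconv, hmaps⟩, hmin⟩ := hM
  let : SemigroupAction S M :=
    { smul s := (hmaps s).restrict (π s) M M
      mul_smul s t z := Subtype.ext (hmul s t z z.2) }
  have : ContinuousConstSMul S M := ⟨fun s => (hcont s).mapsToRestrict (hmaps s)⟩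
  have := isCompact_iff_compactSpace.1 hMc
  have := hne.to_subtype
  let := borel M
  have : BorelSpace M := ⟨rfl⟩
  obtain ⟨m, hm, hm_reg, hm_inv⟩ := exists_invariant_isProbabilityMeasure (Z := M) hLIM
    fun z => (horbit z z.2).subtype_mk _
  let e : M → X := fun z => (toWeakSpace ℝ X).symm z
  have he : Continuous fun z => toWeakSpace ℝ X (e z) := continuous_subtype_val
  have hrange : range e = (toWeakSpace ℝ X).symm '' M := by rw [image_eq_range]
  refine seminorm_sub_eq_zero_of_minimal hm_inv he ?_ (fun C hC hCc hCne hCmaps z => ?_) hp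
    (fun s u v => hle s u u.2 v v.2) ⟨x, hx⟩ ⟨y, hy⟩
  · exact hrange ▸ hconv.linear_image (toWeakSpace ℝ X).symm.toLinearMap
  · have hCM : Subtype.val '' (e ⁻¹' C) = M ∩ (toWeakSpace ℝ X).symm ⁻¹' C :=
      Subtype.image_preimage_coe M _
    have hsub : M ⊆ Subtype.val '' (e ⁻¹' C) := hmin ⟨hCne.image _,
      (isClosed_preimage_of_convex he hC hCc).isCompact.image continuous_subtype_val,
      hCM ▸ hconv.inter (hC.linear_preimage (toWeakSpace ℝ X).symm.toLinearMap),
      fun s => ?_⟩ (Subtype.coe_image_subset M _)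
    · obtain ⟨u, hu, huz⟩ := hsub z.2
      exact Subtype.ext huz ▸ hu
    · rintro _ ⟨u, hu, rfl⟩
      exact ⟨s • u, hCmaps s hu, rfl⟩

theorem exists_fixedPoint_of_hasLIM (hLIM : HasLIM S (LMCset S)) {ι : Type*}
    {Q : SeminormFamily ℝ X ι} (hQ : WithSeminorms Q) {K : Set (WeakSpace ℝ X)}
    (hne : K.Nonempty) (hconv : Convex ℝ K) (hK : IsCompact K) (hmaps : ∀ s, MapsTo (π s) K K)
    (hmul : ∀ s t, ∀ x ∈ K, π (s * t) x = π s (π t x))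
    (horbit : ∀ x ∈ K, Continuous fun s => π s x) (hcont : ∀ s, ContinuousOn (π s) K)
    (hle : ∀ i s, ∀ x ∈ K, ∀ y ∈ K, Q i ((toWeakSpace ℝ X).symm (π s x - π s y)) ≤
      Q i ((toWeakSpace ℝ X).symm (x - y))) :
    ∃ x ∈ K, ∀ s, π s x = x := by
  have := hQ.topologicalAddGroup
  have := hQ.continuousSMul
  have := hQ.toLocallyConvexSpace
  obtain ⟨M, hMK, hM⟩ := exists_minimal_isCompact
    (P := fun A => Convex ℝ A ∧ ∀ s, MapsTo (π s) A A)
    (fun c hc => ⟨convex_sInter fun A hA => (hc A hA).1,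
      fun s x hx A hA => (hc A hA).2 s (hx A hA)⟩) hne hK ⟨hconv, hmaps⟩
  obtain ⟨x, hx⟩ := hM.prop.1
  refine ⟨x, hMK hx, fun s => by_contra fun hsx => ?_⟩
  obtain ⟨i, hi⟩ := hQ.separating_of_T1 ((toWeakSpace ℝ X).symm (π s x - x))
    ((toWeakSpace ℝ X).symm.map_ne_zero_iff.2 (sub_ne_zero.2 hsx))
  exact hi <| seminorm_sub_eq_zero_of_minimal_invariant hLIM hM
    (fun s t x hx => hmul s t x (hMK hx)) (fun x hx => horbit x (hMK hx))
    (fun s => (hcont s).mono hMK) (hQ.continuous_seminorm i)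
    (fun s x hx y hy => hle i s x (hMK hx) y (hMK hy)) (hM.prop.2.2.2 s hx) hx

end FixedPoint

theorem propertyG_of_LMC_hasLIM_general {S : Type u} [Semigroup S] [TopologicalSpace S]
    (hLIM : HasLIM S (LMCset S)) : PropertyG.{u, v} S := by
  intro X _ _ _ _ ι _ Q hQ K π hne hconv hK hmaps hmul horbit hcont hle
  rw [weakTop_eq_weakSpace] at hK horbit hcont
  exact exists_fixedPoint_of_hasLIM hLIM hQ hne hconv hK hmaps hmul horbit hcont hle

/-- **Theorem (LMC)**: if `LMC(S)` has a left invariant mean, then `S` has property (G). -/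
theorem propertyG_of_LMC_hasLIM
    {S : Type u} [Semigroup S] [TopologicalSpace S] [T2Space S]
    (hS : IsSemitopologicalSemigroup S)
    (hLIM : HasLIM S (LMCset S)) :
    PropertyG.{u, v} S :=
  propertyG_of_LMC_hasLIM_general hLIM
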